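/- arXiv:1705.09574 — 6 statements merged into one kernel-verified Lean document; each statement's English description precedes it below -/
import Mathlib

section
/- A coherent set of almost desirable gambles K ⊆ ℝ^n is maximal (i.e., there is no coherent set of almost desirable gambles K' with K ⊊ K') if and only if there exists a unique vector v ∈ ℝ^n with v > 0_n and ‖v‖ = 1 such that K = {g ∈ ℝ^n : ⟨v, g⟩ ≥ 0}. -/
open BigOperators

/-- A coherent set of almost desirable gambles on an `n`-element outcome space,
gambles being identified with vectors in `ℝ^n`. -/
def CohAlmostDesirable {n : ℕ} (K : Set (Fin n → ℝ)) : Prop :=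
  (∀ g ∈ K, ∀ f ∈ K, g + f ∈ K) ∧                                    -- A1
  (∀ g ∈ K, ∀ l : ℝ, 0 < l → l • g ∈ K) ∧                            -- A2
  (∀ g : Fin n → ℝ, (∀ i, 0 ≤ g i) → g ≠ 0 → g ∈ K) ∧                -- A3
  ((fun _ : Fin n => (-1 : ℝ)) ∉ K) ∧                                 -- A6
  (∀ g : Fin n → ℝ, (∀ f : Fin n → ℝ, (∀ i, 0 ≤ f i) → f ≠ 0 → g + f ∈ K) → g ∈ K)  -- A7

/-!
The constant gamble `1` is an order unit for a coherent `K`, and `-1 ∉ K`. Hence the functional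
`c • 1 ↦ c` is nonnegative on `K ∩ ℝ • 1`, and by the M. Riesz extension theorem it extends to a
linear functional on `ℝ^n` that is nonnegative on `K`. This functional is `⟨v, ·⟩` for some `v > 0`,
so `K` lies in a halfspace that is itself coherent, and a maximal `K` equals it. Conversely, a
convex cone strictly containing a halfspace is the whole space and so contains `-1`. A halfspace
determines its normal vector up to a positive factor, which the condition `‖v‖ = 1` fixes.
-/

section PointedCone

theorem exists_linearMap_apply_eq_one_and_nonneg {E : Type*} [AddCommGroup E] [Module ℝ E]
    (C : PointedCone ℝ E) {u : E} (hu : -u ∉ C) (hunit : ∀ x, ∃ c : ℝ, c • u + x ∈ C) :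
    ∃ φ : E →ₗ[ℝ] ℝ, φ u = 1 ∧ ∀ x ∈ C, 0 ≤ φ x := by
  have hu_ne : u ≠ 0 := fun h => hu (by simp [h])
  have coeff_nonneg : ∀ c : ℝ, c • u ∈ C → 0 ≤ c := by
    intro c hc
    by_contra! hc_neg
    have hmem := C.smul_mem (inv_nonneg.2 (neg_nonneg.2 hc_neg.le)) hc
    rw [smul_smul, inv_neg, neg_mul, inv_mul_cancel₀ hc_neg.ne, neg_one_smul] at hmem
    exact hu hmem
  let f : E →ₗ.[ℝ] ℝ := LinearPMap.mkSpanSingleton u 1 hu_ne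
  have f_smul (c : ℝ) (h : c • u ∈ f.domain) : f ⟨c • u, h⟩ = c :=
    (LinearPMap.mkSpanSingleton'_apply u (1 : ℝ) _ c h).trans (mul_one c)
  have smul_mem_domain (c : ℝ) : c • u ∈ f.domain :=
    Submodule.smul_mem _ c (Submodule.mem_span_singleton_self u)
  have f_nonneg (x : f.domain) (hxC : (x : E) ∈ C) : 0 ≤ f x := by
    obtain ⟨x, hx⟩ := x
    obtain ⟨c, rfl⟩ := Submodule.mem_span_singleton.1 hx
    rw [f_smul]
    exact coeff_nonneg c hxC
  obtain ⟨φ, φ_eq, φ_nonneg⟩ := riesz_extension C f f_nonneg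
    (fun x => (hunit x).imp' (fun c => ⟨c • u, smul_mem_domain c⟩) fun _ hc => hc)
  have φ_one_smul : φ ((1 : ℝ) • u) = 1 :=
    (φ_eq ⟨(1 : ℝ) • u, smul_mem_domain 1⟩).trans (f_smul 1 _)
  exact ⟨φ, by rwa [one_smul] at φ_one_smul, φ_nonneg⟩

variable {R E : Type*} [Field R] [LinearOrder R] [IsStrictOrderedRing R] [AddCommGroup E]
  [Module R E]

theorem isCoatom_comap_positive {φ : E →ₗ[R] R} (hφ : φ ≠ 0) :
    IsCoatom ((PointedCone.positive R R).comap φ) := by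
  refine ⟨fun htop => hφ ?_, fun C hlt => eq_top_iff.2 fun y _ => ?_⟩
  · have nonneg (x : E) : 0 ≤ φ x := by
      have hx : x ∈ (PointedCone.positive R R).comap φ := htop ▸ Submodule.mem_top
      exact hx
    ext x
    exact le_antisymm (by simpa using nonneg (-x)) (nonneg x)
  · obtain ⟨x, hxC, hx⟩ := SetLike.exists_of_lt hlt
    have hx_neg : φ x < 0 := not_le.1 hx
    let t := max (φ y / φ x) 1
    have ht : 0 < t := lt_max_of_lt_right one_pos
    have hdiff : y - t • x ∈ (PointedCone.positive R R).comap φ := by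
      have hty : t * φ x ≤ φ y := (div_le_iff_of_neg hx_neg).1 (le_max_left _ _)
      simpa using hty
    simpa using C.add_mem (hlt.le hdiff) (C.smul_mem ht.le hxC)

theorem exists_nonneg_smul_eq_of_comap_positive_le {φ ψ : E →ₗ[R] R}
    (hle : (PointedCone.positive R R).comap φ ≤ (PointedCone.positive R R).comap ψ) :
    ∃ c : R, 0 ≤ c ∧ ψ = c • φ := by
  have ψ_nonneg (x : E) (hx : 0 ≤ φ x) : 0 ≤ ψ x := hle hx
  have ψ_eq_zero (x : E) (hx : φ x = 0) : ψ x = 0 :=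
    le_antisymm (by simpa using ψ_nonneg (-x) (by simp [hx])) (ψ_nonneg x hx.ge)
  by_cases hφ : φ = 0
  · exact ⟨0, le_rfl, by ext x; simpa using ψ_eq_zero x (by simp [hφ])⟩
  obtain ⟨u, hu⟩ := LinearMap.surjective hφ 1
  refine ⟨ψ u, ψ_nonneg u (hu ▸ zero_le_one), ?_⟩
  ext x
  have hx : ψ (x - φ x • u) = 0 := ψ_eq_zero _ (by simp [hu])
  simpa [mul_comm, sub_eq_zero] using hx

end PointedCone

section Halfspace

variable {ι : Type*} [Fintype ι]

section OrderedField

variable {R : Type*} [Field R] [LinearOrder R] [IsStrictOrderedRing R]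

/-- The closed halfspace `{g | 0 ≤ ⟨v, g⟩}` with inner normal `v`, as a pointed cone; it is the
whole space when `v = 0`. -/
def halfspace (v : ι → R) : PointedCone R (ι → R) :=
  (PointedCone.positive R R).comap (dotProductBilin R R v)

theorem mem_halfspace {v g : ι → R} : g ∈ halfspace v ↔ 0 ≤ v ⬝ᵥ g := Iff.rfl

theorem isCoatom_halfspace {v : ι → R} (hv : v ≠ 0) : IsCoatom (halfspace v) :=
  isCoatom_comap_positive fun h =>
    hv (dotProduct_self_eq_zero.1 (DFunLike.congr_fun h v))

theorem eq_of_halfspace_eq {v w : ι → R} (hv : v ⬝ᵥ v = 1) (hw : w ⬝ᵥ w = 1)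
    (h : halfspace v = halfspace w) : v = w := by
  obtain ⟨c, hc, hcφ⟩ := exists_nonneg_smul_eq_of_comap_positive_le h.ge
  have hvw : v = c • w := dotProduct_eq _ _ fun g => by
    simpa using DFunLike.congr_fun hcφ g
  have hc_sq : c * c = 1 := by simpa [hvw, hw] using hv
  have hc_one : c = 1 := (mul_self_eq_one_iff.1 hc_sq).resolve_right (by linarith)
  rw [hvw, hc_one, one_smul]

end OrderedField

theorem dotProduct_one_pos {R : Type*} [NonAssocSemiring R] [PartialOrder R]
    [IsOrderedCancelAddMonoid R] {v : ι → R} (hv : 0 < v) : 0 < v ⬝ᵥ 1 := by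
  rw [dotProduct_one]
  exact Fintype.sum_pos hv

theorem sqrt_sum_sq_eq_one_iff (v : ι → ℝ) : √(∑ i, v i ^ 2) = 1 ↔ v ⬝ᵥ v = 1 := by
  simp only [Real.sqrt_eq_one, dotProduct, sq]

theorem exists_pos_smul_dotProduct_self_eq_one {v : ι → ℝ} (hv : v ≠ 0) :
    ∃ r : ℝ, 0 < r ∧ (r • v) ⬝ᵥ (r • v) = 1 := by
  have hvv : 0 < v ⬝ᵥ v := by simpa using Matrix.dotProduct_star_self_pos_iff.2 hv
  refine ⟨(√(v ⬝ᵥ v))⁻¹, inv_pos.2 (Real.sqrt_pos.2 hvv), ?_⟩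
  rw [smul_dotProduct, dotProduct_smul, smul_smul, ← mul_inv, Real.mul_self_sqrt hvv.le,
    smul_eq_mul, inv_mul_cancel₀ hvv.ne']

end Halfspace

namespace CohAlmostDesirable

variable {n : ℕ} {K : Set (Fin n → ℝ)}

theorem neg_one_notMem (hK : CohAlmostDesirable K) : -1 ∉ K := hK.2.2.2.1

theorem mem_of_nonneg (hK : CohAlmostDesirable K) {g : Fin n → ℝ} (hg : 0 ≤ g) : g ∈ K := by
  obtain ⟨-, -, pos_mem, -, mem_of_add_pos_mem⟩ := hK
  by_cases hg_zero : g = 0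
  · refine mem_of_add_pos_mem g fun f hf hf_ne => ?_
    rw [hg_zero, zero_add]
    exact pos_mem f hf hf_ne
  · exact pos_mem g hg hg_zero

/-- A coherent set of almost desirable gambles, bundled as a pointed cone so that results about
cones apply to it. -/
def toPointedCone (hK : CohAlmostDesirable K) : PointedCone ℝ (Fin n → ℝ) :=
  ConvexCone.toPointedCone
    { carrier := K
      smul_mem' := fun c hc g hg => hK.2.1 g hg c hc
      add_mem' := fun g hg f hf => hK.1 g hg f hf }
    (hK.mem_of_nonneg le_rfl)

theorem exists_smul_one_add_mem (hK : CohAlmostDesirable K) (g : Fin n → ℝ) :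
    ∃ c : ℝ, c • 1 + g ∈ K := by
  refine ⟨‖g‖, hK.mem_of_nonneg fun i => ?_⟩
  have hgi : -‖g‖ ≤ g i := neg_le_of_abs_le (norm_le_pi_norm g i)
  simpa using neg_le_iff_add_nonneg'.1 hgi

theorem exists_subset_halfspace (hK : CohAlmostDesirable K) :
    ∃ v : Fin n → ℝ, 0 < v ∧ K ⊆ halfspace v := by
  obtain ⟨φ, φ_one, φ_nonneg⟩ := exists_linearMap_apply_eq_one_and_nonneg hK.toPointedCone
    hK.neg_one_notMem hK.exists_smul_one_add_mem
  obtain ⟨v, rfl⟩ := (dotProductEquiv ℝ (Fin n)).surjective φ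
  have hv_nonneg : 0 ≤ v := fun i => by
    have hmem : Pi.single i 1 ∈ K := hK.mem_of_nonneg (Pi.single_nonneg.2 zero_le_one)
    simpa using φ_nonneg _ hmem
  have hv_ne : v ≠ 0 := by
    rintro rfl
    simp at φ_one
  exact ⟨v, hv_nonneg.lt_of_ne' hv_ne, φ_nonneg⟩

theorem exists_unit_subset_halfspace (hK : CohAlmostDesirable K) :
    ∃ v : Fin n → ℝ, 0 < v ∧ v ⬝ᵥ v = 1 ∧ K ⊆ halfspace v := by
  obtain ⟨w, hw, hKw⟩ := hK.exists_subset_halfspace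
  obtain ⟨r, hr, hrw⟩ := exists_pos_smul_dotProduct_self_eq_one hw.ne'
  refine ⟨r • w, smul_pos hr hw, hrw, fun g hg => ?_⟩
  have hwg : 0 ≤ w ⬝ᵥ g := hKw hg
  rw [SetLike.mem_coe, mem_halfspace, smul_dotProduct]
  exact smul_nonneg hr.le hwg

theorem not_halfspace_ssubset (hK : CohAlmostDesirable K) {v : Fin n → ℝ} (hv : v ≠ 0) :
    ¬ (halfspace v : Set (Fin n → ℝ)) ⊂ K := by
  intro hlt
  have htop : hK.toPointedCone = ⊤ := (isCoatom_halfspace hv).2 _ hlt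
  have hmem : -1 ∈ hK.toPointedCone := htop ▸ Submodule.mem_top
  exact hK.neg_one_notMem hmem

end CohAlmostDesirable

theorem cohAlmostDesirable_halfspace {n : ℕ} {v : Fin n → ℝ} (hv : 0 < v) :
    CohAlmostDesirable (halfspace v : Set (Fin n → ℝ)) := by
  have hv_one := dotProduct_one_pos hv
  refine ⟨fun g hg f hf => (halfspace v).add_mem hg hf,
    fun g hg l hl => (halfspace v).smul_mem hl.le hg,
    fun g hg _ => dotProduct_nonneg_of_nonneg hv.le hg, fun hmem => ?_, fun g hg => ?_⟩
  · have hnonneg : 0 ≤ v ⬝ᵥ -1 := hmem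
    rw [dotProduct_neg] at hnonneg
    linarith
  · rw [SetLike.mem_coe, mem_halfspace]
    refine le_of_forall_pos_le_add fun ε hε => ?_
    let f : Fin n → ℝ := (ε / (v ⬝ᵥ 1)) • 1
    have hvf : v ⬝ᵥ f = ε := by
      rw [dotProduct_smul, smul_eq_mul, div_mul_cancel₀ _ hv_one.ne']
    have hf_ne : f ≠ 0 := fun hf => hε.ne' (by rw [← hvf, hf, dotProduct_zero])
    have hf_nonneg : 0 ≤ f := smul_nonneg (div_pos hε hv_one).le zero_le_one
    have hgf : 0 ≤ v ⬝ᵥ (g + f) := hg f hf_nonneg hf_ne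
    rwa [dotProduct_add, hvf] at hgf

/-- A coherent set of almost desirable gambles is maximal iff it is the halfspace
determined by a unique nonnegative unit-norm vector. -/
theorem almost_desirable_maximal_iff {n : ℕ} (K : Set (Fin n → ℝ))
    (hK : CohAlmostDesirable K) :
    (∀ K' : Set (Fin n → ℝ), CohAlmostDesirable K' → ¬ K ⊂ K') ↔
      ∃! v : Fin n → ℝ, (∀ i, 0 ≤ v i) ∧ v ≠ 0 ∧ Real.sqrt (∑ i, v i ^ 2) = 1 ∧
        K = {g : Fin n → ℝ | 0 ≤ ∑ i, v i * g i} := by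
  constructor
  · intro hmax
    obtain ⟨v, hv_pos, hv_unit, hKv⟩ := hK.exists_unit_subset_halfspace
    have hK_eq : K = halfspace v := by
      by_contra hne
      exact hmax _ (cohAlmostDesirable_halfspace hv_pos) (hKv.ssubset_of_ne hne)
    refine ⟨v, ⟨hv_pos.le, hv_pos.ne', (sqrt_sum_sq_eq_one_iff v).2 hv_unit, hK_eq⟩, ?_⟩
    rintro w ⟨-, -, hw_unit, hKw⟩
    exact eq_of_halfspace_eq ((sqrt_sum_sq_eq_one_iff w).1 hw_unit) hv_unit
      (SetLike.coe_injective (hKw.symm.trans hK_eq))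
  · rintro ⟨v, ⟨-, hv_ne, -, rfl⟩, -⟩ K' hK'
    exact hK'.not_halfspace_ssubset hv_ne
end

section
/- Let G ⊆ ℝ^n be a nonempty convex set and ḡ ∈ ℝ^n with ḡ ∉ G. Then there exist a matrix A ∈ ℝ^{n×n} and a vector b ∈ ℝ^n such that Ag >_L b and b ≥_L Aḡ for all g ∈ G, where >_L and ≥_L denote the strict and non-strict lexicographic order on ℝ^n. -/
open Matrix BigOperators

/-- `g <_L f`: `g` is lexicographically less than `f`, i.e. at the first index where they
differ, `g` is smaller. -/
def LexLt {n : ℕ} (g f : Fin n → ℝ) : Prop :=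
  ∃ k : Fin n, (∀ i : Fin n, i < k → g i = f i) ∧ g k < f k

/-- `g ≤_L f`: `g <_L f` or `g = f`. -/
def LexLe {n : ℕ} (g f : Fin n → ℝ) : Prop := LexLt g f ∨ g = f

/-- `A >_L 0_n`: every column of `A` is lexicographically positive. -/
def ColsLexPos {n : ℕ} (A : Matrix (Fin n) (Fin n) ℝ) : Prop :=
  ∀ j : Fin n, LexLt 0 (fun i => A i j)

/-- A coherent set of desirable gambles on an `n`-element outcome space. -/
def CohDesirable {n : ℕ} (K : Set (Fin n → ℝ)) : Prop :=
  (∀ g ∈ K, ∀ f ∈ K, g + f ∈ K) ∧                      -- A1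
  (∀ g ∈ K, ∀ l : ℝ, 0 < l → l • g ∈ K) ∧              -- A2
  (∀ g : Fin n → ℝ, (∀ i, 0 ≤ g i) → g ≠ 0 → g ∈ K) ∧  -- A3
  (0 : Fin n → ℝ) ∉ K                                   -- A4

/-!
In a nonzero finite-dimensional space, a convex set `s` lies in a half-space `{f ≥ f x}`, `f ≠ 0`,
for each point `x ∉ s`. Take `x = 0`: the points of `s` with `f v > 0` are already separated from
`0`, and the remaining ones form a convex set in the hyperplane `ker f` that still avoids `0`.
Repeating the argument inside `ker f` lowers the dimension each time, so `dim V` functionals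
suffice; they are the coordinates of the separating map, most significant first.
-/

section LexLt

variable {n : ℕ}

theorem lexLt_zero_sub_iff {x y : Fin n → ℝ} : LexLt 0 (y - x) ↔ LexLt x y := by
  simp only [LexLt, Pi.zero_apply, Pi.sub_apply, sub_pos, eq_comm (a := (0 : ℝ)),
    sub_eq_zero, eq_comm (a := y _)]

theorem lexLt_vecCons_iff {a b : ℝ} {x y : Fin n → ℝ} :
    LexLt (vecCons a x) (vecCons b y) ↔ a < b ∨ a = b ∧ LexLt x y :=
  Fin.pi_lex_lt_cons_cons _

theorem lexLt_zero_vecCons_iff {a : ℝ} {x : Fin n → ℝ} :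
    LexLt 0 (vecCons a x) ↔ 0 < a ∨ a = 0 ∧ LexLt 0 x := by
  rw [← cons_zero_zero, lexLt_vecCons_iff, eq_comm (a := 0)]

end LexLt

theorem exists_dual_ne_zero_forall_apply_eq_of_affineSpan_ne_top {k V : Type*} [Field k]
    [AddCommGroup V] [Module k V] [Nontrivial V] {s : Set V} (hs : affineSpan k s ≠ ⊤) :
    ∃ f : Module.Dual k V, f ≠ 0 ∧ ∀ x ∈ s, ∀ y ∈ s, f x = f y := by
  have hspan : vectorSpan k s < ⊤ := by
    rwa [lt_top_iff_ne_top, ne_eq,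
      ← AffineSubspace.affineSpan_eq_top_iff_vectorSpan_eq_top_of_nontrivial]
  obtain ⟨f, hf, hker⟩ := Submodule.exists_le_ker_of_lt_top _ hspan
  refine ⟨f, hf, fun x hx y hy ↦ sub_eq_zero.mp ?_⟩
  rw [← map_sub]
  exact hker (vsub_mem_vectorSpan k hx hy)

theorem exists_dual_ne_zero_forall_apply_le_of_normedSpace {V : Type*} [NormedAddCommGroup V]
    [NormedSpace ℝ V] [FiniteDimensional ℝ V] [Nontrivial V] {s : Set V} (hs : Convex ℝ s) {x : V}
    (hx : x ∉ s) : ∃ f : Module.Dual ℝ V, f ≠ 0 ∧ ∀ v ∈ s, f x ≤ f v := by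
  by_cases hspan : affineSpan ℝ s = ⊤
  · obtain ⟨f, hf, hle⟩ := geometric_hahn_banach_of_nonempty_interior_point hs
      (fun h ↦ hx (interior_subset h)) (hs.interior_nonempty_iff_affineSpan_eq_top.mpr hspan)
    exact ⟨-f.toLinearMap, neg_ne_zero.mpr fun h ↦ hf (ContinuousLinearMap.coe_injective h),
      fun v hv ↦ neg_le_neg (hle v hv)⟩
  · obtain ⟨f, hf, hconst⟩ := exists_dual_ne_zero_forall_apply_eq_of_affineSpan_ne_top hspan
    by_cases hle : ∀ v ∈ s, f x ≤ f v
    · exact ⟨f, hf, hle⟩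
    · push Not at hle
      obtain ⟨w, hw, hlt⟩ := hle
      refine ⟨-f, neg_ne_zero.mpr hf, fun v hv ↦ neg_le_neg ?_⟩
      exact (hconst v hv w hw).trans_le hlt.le

section FiniteDimensional

variable {V : Type*} [AddCommGroup V] [Module ℝ V] [FiniteDimensional ℝ V] {s : Set V}

theorem exists_dual_ne_zero_forall_apply_le [Nontrivial V] (hs : Convex ℝ s) {x : V} (hx : x ∉ s) :
    ∃ f : Module.Dual ℝ V, f ≠ 0 ∧ ∀ v ∈ s, f x ≤ f v := by
  let e := (Module.finBasis ℝ V).equivFun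
  have : Nontrivial (Fin (Module.finrank ℝ V) → ℝ) := e.symm.toEquiv.nontrivial
  obtain ⟨f, hf, hle⟩ := exists_dual_ne_zero_forall_apply_le_of_normedSpace
    (hs.linear_image e.toLinearMap) (e.injective.mem_set_image.not.mpr hx)
  refine ⟨f ∘ₗ e.toLinearMap, fun h ↦ hf ?_, fun v hv ↦ hle _ ⟨v, hv, rfl⟩⟩
  rwa [← LinearMap.cancel_right e.surjective, LinearMap.zero_comp]

theorem exists_linearMap_forall_zero_lexLt {n : ℕ} (hn : Module.finrank ℝ V = n)
    (hs : Convex ℝ s) (h0 : 0 ∉ s) :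
    ∃ A : V →ₗ[ℝ] (Fin n → ℝ), ∀ v ∈ s, LexLt 0 (A v) := by
  induction n generalizing V with
  | zero =>
    have := Module.finrank_zero_iff.mp hn
    exact ⟨0, fun v hv ↦ absurd (Subsingleton.elim v 0 ▸ hv) h0⟩
  | succ n ih =>
    have : Nontrivial V := Module.nontrivial_of_finrank_eq_succ hn
    obtain ⟨f, hf, hnonneg⟩ := exists_dual_ne_zero_forall_apply_le hs h0
    rw [map_zero] at hnonneg
    have hker : Module.finrank ℝ f.ker = n := by
      have := Module.Dual.finrank_ker_add_one_of_ne_zero hf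
      lia
    obtain ⟨B, hB⟩ := ih hker (hs.linear_preimage f.ker.subtype) (by simpa using h0)
    obtain ⟨C, rfl⟩ := B.exists_extend
    refine ⟨f.vecCons C, fun v hv ↦ ?_⟩
    rw [LinearMap.vecCons_apply, lexLt_zero_vecCons_iff]
    exact (hnonneg v hv).lt_or_eq.imp_right fun h ↦ ⟨h.symm, hB ⟨v, h.symm⟩ hv⟩

theorem lexicographic_separation_general {n : ℕ} (hn : Module.finrank ℝ V = n) (hs : Convex ℝ s)
    {x : V} (hx : x ∉ s) :
    ∃ A : V →ₗ[ℝ] (Fin n → ℝ), ∀ v ∈ s, LexLt (A x) (A v) := by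
  obtain ⟨A, hA⟩ := exists_linearMap_forall_zero_lexLt hn (hs.translate_preimage_right x)
    (by simpa using hx)
  refine ⟨A, fun v hv ↦ ?_⟩
  rw [← lexLt_zero_sub_iff, ← map_sub]
  exact hA (v - x) (by simpa using hv)

end FiniteDimensional

/-- Lexicographic separation theorem for convex sets (Martínez-Legaz). -/
theorem lexicographic_separation {n : ℕ} (G : Set (Fin n → ℝ)) (hne : G.Nonempty)
    (hconv : Convex ℝ G) (gbar : Fin n → ℝ) (hgbar : gbar ∉ G) :
    ∃ (A : Matrix (Fin n) (Fin n) ℝ) (b : Fin n → ℝ),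
      (∀ g ∈ G, LexLt b (A.mulVec g)) ∧ LexLe (A.mulVec gbar) b := by
  obtain ⟨A, hA⟩ := lexicographic_separation_general (Module.finrank_fin_fun ℝ) hconv hgbar
  exact ⟨A.toMatrix', A gbar, by simpa using hA, .inr (by simp)⟩
end

section
/- Let K ⊆ ℝ^n be a coherent set of desirable gambles and let ḡ ∈ ℝ^n with ḡ ∉ K. Then there exists a matrix A ∈ ℝ^{n×n} with orthonormal rows (A Aᵀ = I) and with every column lexicographically positive (A >_L 0_n) such that Ag >_L 0_n for all g ∈ K and Aḡ ≤_L 0_n. -/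
open Matrix BigOperators

/-!
A convex cone `C` omitting the origin has a supporting hyperplane there, with unit normal `v` say.
Vectors of `C` off the hyperplane have positive first coordinate along `v`; the others form a cone
in `vᗮ` which again omits the origin, so induction on the dimension yields an orthonormal basis in
which all of `C` is lexicographically positive. To place a nonzero `g ∉ C` on the other side, first
adjoin `-g` to `C`: the enlarged cone still omits the origin.
-/

open Module

theorem exists_dual_ne_zero_forall_le_of_notMem_interior {E : Type*} [NormedAddCommGroup E]
    [NormedSpace ℝ E] [FiniteDimensional ℝ E] [Nontrivial E] {s : Set E} (hs : Convex ℝ s)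
    {x : E} (hx : x ∉ interior s) :
    ∃ f : StrongDual ℝ E, f ≠ 0 ∧ ∀ y ∈ s, f y ≤ f x := by
  by_cases hspan : vectorSpan ℝ s = ⊤
  · have hint : (interior s).Nonempty := hs.interior_nonempty_iff_affineSpan_eq_top.2
      ((AffineSubspace.affineSpan_eq_top_iff_vectorSpan_eq_top_of_nontrivial ℝ E E).2 hspan)
    exact geometric_hahn_banach_of_nonempty_interior_point hs hx hint
  · obtain ⟨φ, hφ, hker⟩ := Submodule.exists_le_ker_of_lt_top _ (lt_top_iff_ne_top.2 hspan)
    let f : StrongDual ℝ E := φ.toContinuousLinearMap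
    have hf : f ≠ 0 := (map_ne_zero_iff _ LinearMap.toContinuousLinearMap.injective).2 hφ
    have hconst : ∀ y ∈ s, ∀ z ∈ s, f y = f z := fun y hy z hz =>
      sub_eq_zero.1 ((map_sub φ y z).symm.trans (hker (vsub_mem_vectorSpan ℝ hy hz)))
    by_cases hle : ∀ y ∈ s, f y ≤ f x
    · exact ⟨f, hf, hle⟩
    · push Not at hle
      obtain ⟨z, hz, hxz⟩ := hle
      refine ⟨-f, neg_ne_zero.2 hf, fun y hy => neg_le_neg ?_⟩
      exact hxz.le.trans_eq (hconst z hz y hy)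

theorem exists_norm_eq_one_forall_inner_nonneg {E : Type*} [NormedAddCommGroup E]
    [InnerProductSpace ℝ E] [FiniteDimensional ℝ E] [Nontrivial E] {s : Set E} (hs : Convex ℝ s)
    (h0 : (0 : E) ∉ interior s) :
    ∃ v : E, ‖v‖ = 1 ∧ ∀ x ∈ s, 0 ≤ inner ℝ v x := by
  obtain ⟨f, hf, hfs⟩ := exists_dual_ne_zero_forall_le_of_notMem_interior hs h0
  let w : E := (InnerProductSpace.toDual ℝ E).symm (-f)
  have hw : w ≠ 0 := (map_ne_zero_iff _ (LinearIsometryEquiv.injective _)).2 (neg_ne_zero.2 hf)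
  refine ⟨‖w‖⁻¹ • w, norm_smul_inv_norm hw, fun x hx => ?_⟩
  have hwx : 0 ≤ inner ℝ w x := by
    simpa [w, InnerProductSpace.toDual_symm_apply] using hfs x hx
  rw [real_inner_smul_left]
  positivity

theorem exists_orthonormalBasis_coe_eq_cons {𝕜 E : Type*} [RCLike 𝕜] [NormedAddCommGroup E]
    [InnerProductSpace 𝕜 E] [FiniteDimensional 𝕜 E] {n : ℕ} (hn : finrank 𝕜 E = n + 1) {v : E}
    (hv : ‖v‖ = 1) (b : OrthonormalBasis (Fin n) 𝕜 (𝕜 ∙ v)ᗮ) :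
    ∃ b' : OrthonormalBasis (Fin (n + 1)) 𝕜 E, ⇑b' = Fin.cons v fun i => (b i : E) := by
  have horth : Orthonormal 𝕜 (Fin.cons v fun i => (b i : E) : Fin (n + 1) → E) :=
    orthonormal_vecCons_iff.2 ⟨hv,
      fun i => Submodule.mem_orthogonal_singleton_iff_inner_right.1 (b i).2,
      b.orthonormal.comp_linearIsometry (𝕜 ∙ v)ᗮ.subtypeₗᵢ⟩
  obtain ⟨b', hb'⟩ := Orthonormal.exists_orthonormalBasis_extension_of_card_eq (s := Set.univ)
    (hn.trans (Fintype.card_fin _).symm) (horth.comp _ Subtype.val_injective)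
  exact ⟨b', funext fun i => hb' i (Set.mem_univ i)⟩

theorem toLex_fin_succ_pos_iff {α : Type*} [Zero α] [LT α] {n : ℕ} {f : Fin (n + 1) → α} :
    0 < toLex f ↔ 0 < f 0 ∨ 0 = f 0 ∧ 0 < toLex (Fin.tail f) := by
  have h := Fin.pi_lex_lt_cons_cons (α := fun _ => α) (x₀ := 0) (y₀ := f 0)
    (x := fun _ : Fin n => 0) (y := Fin.tail f) (· < ·)
  rwa [Fin.cons_self_tail, show (Fin.cons 0 fun _ => 0 : Fin (n + 1) → α) = 0 from
    Fin.cons_self_tail 0] at h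

section AdjoinNeg

variable {𝕜 V : Type*} [Field 𝕜] [LinearOrder 𝕜] [IsStrictOrderedRing 𝕜] [AddCommGroup V]
  [Module 𝕜 V] {C : ConvexCone 𝕜 V} {g : V}

variable (C g) in
/-- The convex cone generated by `C` and `-g`: its elements are `c - l • g` with `c ∈ C`, `0 ≤ l`,
and `-(l • g)` with `0 < l`. Keeping `0 < l` in the second case allows the cone to be blunt. -/
def coneAdjoinNeg : ConvexCone 𝕜 V where
  carrier := {x | ∃ l : 𝕜, 0 ≤ l ∧ x + l • g ∈ C ∨ 0 < l ∧ x + l • g = 0}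
  smul_mem' := by
    rintro c hc x ⟨l, hl⟩
    have hcx : c • x + (c * l) • g = c • (x + l • g) := by module
    refine ⟨c * l, ?_⟩
    rw [hcx]
    rcases hl with ⟨hl, hxC⟩ | ⟨hl, hx0⟩
    · exact .inl ⟨mul_nonneg hc.le hl, C.smul_mem hc hxC⟩
    · exact .inr ⟨mul_pos hc hl, by rw [hx0, smul_zero]⟩
  add_mem' := by
    rintro x ⟨l, hl⟩ y ⟨m, hm⟩
    have hxy : x + y + (l + m) • g = (x + l • g) + (y + m • g) := by module
    refine ⟨l + m, ?_⟩
    rw [hxy]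
    rcases hl with ⟨hl, hxC⟩ | ⟨hl, hx0⟩ <;> rcases hm with ⟨hm, hyC⟩ | ⟨hm, hy0⟩
    · exact .inl ⟨add_nonneg hl hm, C.add_mem hxC hyC⟩
    · exact .inl ⟨add_nonneg hl hm.le, by rwa [hy0, add_zero]⟩
    · exact .inl ⟨add_nonneg hl.le hm, by rwa [hx0, zero_add]⟩
    · exact .inr ⟨add_pos hl hm, by rw [hx0, hy0, add_zero]⟩

theorem le_coneAdjoinNeg : C ≤ coneAdjoinNeg C g := fun x hx =>
  ⟨0, .inl ⟨le_rfl, by rwa [zero_smul, add_zero]⟩⟩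

theorem neg_mem_coneAdjoinNeg : -g ∈ coneAdjoinNeg C g :=
  ⟨1, .inr ⟨one_pos, by rw [one_smul, neg_add_cancel]⟩⟩

theorem blunt_coneAdjoinNeg (hC : C.Blunt) (hgC : g ∉ C) (hg : g ≠ 0) :
    (coneAdjoinNeg C g).Blunt := by
  rintro ⟨l, hl⟩
  rw [zero_add] at hl
  rcases hl with ⟨hl, hlgC⟩ | ⟨hl, hlg0⟩
  · rcases hl.eq_or_lt with rfl | hl
    · exact hC (zero_smul 𝕜 g ▸ hlgC)
    · exact hgC ((C.smul_mem_iff hl).1 hlgC)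
  · exact smul_ne_zero hl.ne' hg hlg0

end AdjoinNeg

section LexicographicSeparation

variable {n : ℕ}

theorem exists_orthonormalBasis_forall_toLex_repr_pos {E : Type*} [NormedAddCommGroup E]
    [InnerProductSpace ℝ E] [FiniteDimensional ℝ E] (hn : finrank ℝ E = n)
    {C : ConvexCone ℝ E} (hC : C.Blunt) :
    ∃ b : OrthonormalBasis (Fin n) ℝ E, ∀ x ∈ C, 0 < toLex (b.repr x).ofLp := by
  induction n generalizing E with
  | zero =>
    have : Subsingleton E := finrank_zero_iff.1 hn
    exact ⟨(stdOrthonormalBasis ℝ E).reindex (finCongr hn),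
      fun x hx => absurd (Subsingleton.elim x 0 ▸ hx) hC⟩
  | succ n ih =>
    have : Nontrivial E := nontrivial_of_finrank_eq_succ hn
    have : Fact (finrank ℝ E = n + 1) := ⟨hn⟩
    obtain ⟨v, hv, hvC⟩ :=
      exists_norm_eq_one_forall_inner_nonneg C.convex fun h => hC (interior_subset h)
    have hv0 : v ≠ 0 := norm_ne_zero_iff.1 (hv ▸ one_ne_zero)
    obtain ⟨b, hb⟩ := ih (Submodule.finrank_orthogonal_span_singleton hv0)
      (C := C.comap (ℝ ∙ v)ᗮ.subtype) hC
    obtain ⟨b', hb'⟩ := exists_orthonormalBasis_coe_eq_cons hn hv b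
    have repr_zero (x : E) : b'.repr x 0 = inner ℝ v x := by
      rw [b'.repr_apply_apply, hb', Fin.cons_zero]
    have tail_repr (x : (ℝ ∙ v)ᗮ) : Fin.tail (b'.repr x).ofLp = (b.repr x).ofLp := by
      ext i
      simp [Fin.tail, OrthonormalBasis.repr_apply_apply, hb']
    refine ⟨b', fun x hx => toLex_fin_succ_pos_iff.2 ?_⟩
    rw [repr_zero]
    refine (hvC x hx).lt_or_eq.imp_right fun hvx => ⟨hvx, ?_⟩
    have hxv : x ∈ (ℝ ∙ v)ᗮ := Submodule.mem_orthogonal_singleton_iff_inner_right.2 hvx.symm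
    rw [tail_repr ⟨x, hxv⟩]
    exact hb ⟨x, hxv⟩ hx

theorem exists_mem_orthogonalGroup_forall_toLex_mulVec_pos {C : ConvexCone ℝ (Fin n → ℝ)}
    (hC : C.Blunt) :
    ∃ A ∈ orthogonalGroup (Fin n) ℝ, ∀ x ∈ C, 0 < toLex (A *ᵥ x) := by
  obtain ⟨b, hb⟩ := exists_orthonormalBasis_forall_toLex_repr_pos
    (finrank_euclideanSpace_fin (𝕜 := ℝ))
    (C := C.comap (WithLp.linearEquiv 2 ℝ (Fin n → ℝ)).toLinearMap) hC
  let e := EuclideanSpace.basisFun (Fin n) ℝ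
  refine ⟨b.toBasis.toMatrix e, b.toMatrix_orthonormalBasis_mem_orthogonal e, fun x hx => ?_⟩
  have mulVec_eq_repr : b.toBasis.toMatrix e *ᵥ x = (b.repr (WithLp.toLp 2 x)).ofLp :=
    e.coe_toBasis ▸ Basis.toMatrix_mulVec_repr e.toBasis b.toBasis (WithLp.toLp 2 x)
  rw [mulVec_eq_repr]
  exact hb _ hx

theorem exists_mem_orthogonalGroup_lex_separating {C : ConvexCone ℝ (Fin n → ℝ)} (hC : C.Blunt)
    {g : Fin n → ℝ} (hg : g ∉ C) :
    ∃ A ∈ orthogonalGroup (Fin n) ℝ, (∀ x ∈ C, 0 < toLex (A *ᵥ x)) ∧ toLex (A *ᵥ g) ≤ 0 := by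
  by_cases hg0 : g = 0
  · obtain ⟨A, hA, hAC⟩ := exists_mem_orthogonalGroup_forall_toLex_mulVec_pos hC
    exact ⟨A, hA, hAC, by rw [hg0, mulVec_zero, toLex_zero]⟩
  · obtain ⟨A, hA, hAC⟩ :=
      exists_mem_orthogonalGroup_forall_toLex_mulVec_pos (blunt_coneAdjoinNeg hC hg hg0)
    have hAg : 0 < toLex (A *ᵥ -g) := hAC _ neg_mem_coneAdjoinNeg
    rw [mulVec_neg, toLex_neg, Left.neg_pos_iff] at hAg
    exact ⟨A, hA, fun x hx => hAC x (le_coneAdjoinNeg hx), hAg.le⟩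

end LexicographicSeparation

section Gambles

variable {n : ℕ} {K : Set (Fin n → ℝ)}

theorem lexLt_iff_toLex_lt {g f : Fin n → ℝ} : LexLt g f ↔ toLex g < toLex f :=
  Iff.rfl

theorem lexLe_iff_toLex_le {g f : Fin n → ℝ} : LexLe g f ↔ toLex g ≤ toLex f :=
  (le_iff_lt_or_eq (a := toLex g)).symm

/-- A coherent set of desirable gambles bundled as a convex cone, by A1 and A2. -/
def CohDesirable.toConvexCone (hK : CohDesirable K) : ConvexCone ℝ (Fin n → ℝ) where
  carrier := K
  smul_mem' := fun _ hc _ hg => hK.2.1 _ hg _ hc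
  add_mem' := fun _ hg _ hf => hK.1 _ hg _ hf

theorem CohDesirable.blunt_toConvexCone (hK : CohDesirable K) : hK.toConvexCone.Blunt :=
  hK.2.2.2

theorem CohDesirable.single_one_mem (hK : CohDesirable K) (j : Fin n) : Pi.single j 1 ∈ K := by
  have hnonneg : (0 : Fin n → ℝ) ≤ Pi.single j 1 := Pi.single_nonneg.2 zero_le_one
  exact hK.2.2.1 _ hnonneg (Pi.single_ne_zero_iff.2 one_ne_zero)

theorem CohDesirable.colsLexPos (hK : CohDesirable K) {A : Matrix (Fin n) (Fin n) ℝ}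
    (hA : ∀ g ∈ K, LexLt 0 (A *ᵥ g)) : ColsLexPos A := by
  intro j
  have hcol := hA _ (hK.single_one_mem j)
  rwa [mulVec_single_one] at hcol

end Gambles

/-- Lexicographic separation for coherent sets of desirable gambles. -/
theorem desirable_separation {n : ℕ} (K : Set (Fin n → ℝ)) (hK : CohDesirable K)
    (gbar : Fin n → ℝ) (hgbar : gbar ∉ K) :
    ∃ A : Matrix (Fin n) (Fin n) ℝ, A * Aᵀ = 1 ∧ ColsLexPos A ∧
      (∀ g ∈ K, LexLt 0 (A.mulVec g)) ∧ LexLe (A.mulVec gbar) 0 := by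
  obtain ⟨A, hA, hAK, hAgbar⟩ :=
    exists_mem_orthogonalGroup_lex_separating hK.blunt_toConvexCone (g := gbar) hgbar
  have hAK_lex : ∀ g ∈ K, LexLt 0 (A *ᵥ g) := fun g hg => lexLt_iff_toLex_lt.2 (hAK g hg)
  exact ⟨A, (mem_orthogonalGroup_iff _ _).1 hA, hK.colsLexPos hAK_lex, hAK_lex,
    lexLe_iff_toLex_le.2 hAgbar⟩
end

section
/- For a matrix A ∈ ℝ^{n×n}, the following are equivalent: (i) every column of A is lexicographically positive (A >_L 0_n); (ii) A = LP for some lower-triangular matrix L ∈ ℝ^{n×n} with ones on the main diagonal and some matrix P ∈ ℝ^{n×n} such that every column p_{·j} of P satisfies p_{·j} > 0_n (i.e., p_{·j} ≥ 0 componentwise and p_{·j} ≠ 0). -/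
open Matrix BigOperators

/-! The factor `L` can be chosen as `1 - c • N`, where `N` has ones strictly below the diagonal and
zeros elsewhere, for one sufficiently large `c` serving all columns at once. The columns `p` of
`P = L⁻¹ * A` then solve `p i = a i + c * ∑ l < i, p l`, with `a` the corresponding column of `A`.
Up to the leading entry `a k > 0` all terms are nonnegative, and from there on `c * p k ≥ c * a k`
outweighs every `a i`. Conversely, a unit lower triangular matrix preserves the leading entry of a
vector. -/

/-- A unit lower triangular matrix: zero above the diagonal and one on it. The paper calls such a
matrix unitary lower-triangular. -/
structure IsUnitLowerTriangular {m R : Type*} [LT m] [Zero R] [One R] (L : Matrix m m R) :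
    Prop where
  isLowerTriangular : L.IsLowerTriangular
  diag_eq_one : ∀ i, L i i = 1

theorem isUnitLowerTriangular_iff {m R : Type*} [LT m] [Zero R] [One R] {L : Matrix m m R} :
    IsUnitLowerTriangular L ↔ (∀ i j, i < j → L i j = 0) ∧ ∀ i, L i i = 1 :=
  ⟨fun hL ↦ ⟨hL.isLowerTriangular, hL.diag_eq_one⟩, fun ⟨hlower, hdiag⟩ ↦ ⟨hlower, hdiag⟩⟩

section UnitLowerTriangular

variable {m R : Type*} [Fintype m] [LinearOrder m] {L : Matrix m m R}

theorem IsUnitLowerTriangular.mulVec_apply_of_forall_lt_eq_zero [NonAssocSemiring R]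
    (hL : IsUnitLowerTriangular L) {v : m → R} {i : m} (hv : ∀ l < i, v l = 0) :
    (L *ᵥ v) i = v i := by
  have off_diag : ∀ l ≠ i, L i l * v l = 0 := fun l hl ↦ by
    rcases hl.lt_or_gt with hlt | hgt
    · rw [hv l hlt, mul_zero]
    · rw [hL.isLowerTriangular hgt, zero_mul]
  rw [mulVec, dotProduct, Fintype.sum_eq_single i off_diag, hL.diag_eq_one, one_mul]

theorem IsUnitLowerTriangular.toLex_mulVec_pos [NonAssocSemiring R] [LT R]
    (hL : IsUnitLowerTriangular L) {v : m → R} (hv : 0 < toLex v) : 0 < toLex (L *ᵥ v) := by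
  obtain ⟨k, hzero, hpos⟩ := hv
  have mulVec_eq : ∀ i ≤ k, (L *ᵥ v) i = v i := fun i hi ↦
    hL.mulVec_apply_of_forall_lt_eq_zero fun l hl ↦ (hzero l (hl.trans_le hi)).symm
  exact ⟨k, fun i hi ↦ (hzero i hi).trans (mulVec_eq i hi.le).symm,
    hpos.trans_eq (mulVec_eq k le_rfl).symm⟩

theorem IsUnitLowerTriangular.det_eq_one [CommRing R] (hL : IsUnitLowerTriangular L) :
    L.det = 1 := by
  simp only [det_of_isLowerTriangular L hL.isLowerTriangular, hL.diag_eq_one,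
    Finset.prod_const_one]

end UnitLowerTriangular

section OneSubStrictLower

variable {m R : Type*} [LinearOrder m]

/-- The matrix `1 - c • N`, where `N` has ones strictly below the diagonal and zeros elsewhere; it
is the unit lower triangular factor of a matrix with lexicographically positive columns. -/
def oneSubStrictLower (m : Type*) [LinearOrder m] [Ring R] (c : R) : Matrix m m R :=
  1 - c • of fun i l ↦ if l < i then 1 else 0

theorem isUnitLowerTriangular_oneSubStrictLower [Ring R] (c : R) :
    IsUnitLowerTriangular (oneSubStrictLower m c) where
  isLowerTriangular i l (hil : i < l) := by
    simp [oneSubStrictLower, hil.ne, hil.not_gt]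
  diag_eq_one i := by simp [oneSubStrictLower]

theorem oneSubStrictLower_mulVec_apply [Fintype m] [Ring R] (c : R) (v : m → R) (i : m) :
    (oneSubStrictLower m c *ᵥ v) i = v i - c * ∑ l with l < i, v l := by
  rw [oneSubStrictLower, sub_mulVec, one_mulVec, smul_mulVec]
  simp [mulVec, dotProduct, Finset.sum_filter]

variable [Fintype m] [Ring R] {c : R} {p : m → R}

theorem oneSubStrictLower_mulVec_apply_le [PartialOrder R] [IsOrderedRing R] (hc : 0 ≤ c) {i : m}
    (hp : ∀ l < i, 0 ≤ p l) : (oneSubStrictLower m c *ᵥ p) i ≤ p i := by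
  have sum_nonneg : 0 ≤ ∑ l with l < i, p l :=
    Finset.sum_nonneg fun l hl ↦ hp l ((Finset.mem_filter_univ l).1 hl)
  rw [oneSubStrictLower_mulVec_apply]
  exact sub_le_self _ (mul_nonneg hc sum_nonneg)

theorem oneSubStrictLower_mulVec_apply_le_sub [PartialOrder R] [IsOrderedRing R] (hc : 0 ≤ c)
    {i k : m} (hki : k < i) (hp : ∀ l < i, 0 ≤ p l) :
    (oneSubStrictLower m c *ᵥ p) i ≤ p i - c * p k := by
  have le_sum : p k ≤ ∑ l with l < i, p l :=
    Finset.single_le_sum (fun l hl ↦ hp l ((Finset.mem_filter_univ l).1 hl))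
      ((Finset.mem_filter_univ k).2 hki)
  rw [oneSubStrictLower_mulVec_apply]
  gcongr

theorem pos_of_abs_oneSubStrictLower_mulVec_le [LinearOrder R] [IsStrictOrderedRing R]
    {k : m}
    (hnonneg : ∀ i < k, 0 ≤ (oneSubStrictLower m c *ᵥ p) i)
    (hpos : 0 < (oneSubStrictLower m c *ᵥ p) k)
    (hbound : ∀ i, |(oneSubStrictLower m c *ᵥ p) i| ≤ c * (oneSubStrictLower m c *ᵥ p) k) :
    0 < p := by
  set a := oneSubStrictLower m c *ᵥ p
  have hc : 0 ≤ c := nonneg_of_mul_nonneg_left ((abs_nonneg (a k)).trans (hbound k)) hpos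
  have a_le {i : m} : (∀ l < i, 0 ≤ p l) → a i ≤ p i := oneSubStrictLower_mulVec_apply_le hc
  have p_nonneg : ∀ i, 0 ≤ p i := fun i ↦ by
    induction i using WellFoundedLT.induction with
    | ind i ih =>
      rcases lt_trichotomy i k with hik | rfl | hki
      · exact (hnonneg i hik).trans (a_le ih)
      · exact hpos.le.trans (a_le ih)
      · have leading_le : a k ≤ p k := a_le fun l hl ↦ ih l (hl.trans hki)
        calc 0 ≤ a i + c * a k := neg_le_iff_add_nonneg'.1 ((neg_le_abs _).trans (hbound i))
          _ ≤ a i + c * p k := by gcongr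
          _ ≤ p i := le_sub_iff_add_le.1 (oneSubStrictLower_mulVec_apply_le_sub hc hki ih)
  exact Pi.lt_def.2 ⟨p_nonneg, k, hpos.trans_le (a_le fun l _ ↦ p_nonneg l)⟩

end OneSubStrictLower

section Factorization

variable {m ι K : Type*} [Field K] [LinearOrder K] [IsStrictOrderedRing K]

theorem exists_forall_le_mul_of_pos [Finite ι] (f : ι → K) {g : ι → K} (hg : ∀ x, 0 < g x) :
    ∃ c, ∀ x, f x ≤ c * g x := by
  obtain ⟨c, hc⟩ := (Set.finite_range fun x ↦ f x / g x).bddAbove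
  exact ⟨c, fun x ↦ (div_le_iff₀ (hg x)).1 (hc ⟨x, rfl⟩)⟩

variable [Fintype m] [LinearOrder m]

theorem exists_isUnitLowerTriangular_mul_of_toLex_col_pos [Finite ι] {A : Matrix m ι K}
    (hA : ∀ j, 0 < toLex (A.col j)) :
    ∃ (L : Matrix m m K) (P : Matrix m ι K),
      IsUnitLowerTriangular L ∧ (∀ j, 0 < P.col j) ∧ A = L * P := by
  choose lead hzero hpos using hA
  obtain ⟨c, hc⟩ := exists_forall_le_mul_of_pos (fun x : m × ι ↦ |A x.1 x.2|) fun x ↦ hpos x.2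
  set L := oneSubStrictLower m c
  have hL : IsUnitLowerTriangular L := isUnitLowerTriangular_oneSubStrictLower c
  have hA_eq : L * (L⁻¹ * A) = A :=
    mul_nonsing_inv_cancel_left L A (hL.det_eq_one ▸ isUnit_one)
  refine ⟨L, L⁻¹ * A, hL, fun j ↦ ?_, hA_eq.symm⟩
  have mulVec_col : L *ᵥ (L⁻¹ * A).col j = A.col j := congr_arg (·.col j) hA_eq
  apply pos_of_abs_oneSubStrictLower_mulVec_le (c := c) (k := lead j) <;> rw [mulVec_col]
  · exact fun i hi ↦ (hzero j i hi).le
  · exact hpos j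
  · exact fun i ↦ hc (i, j)

theorem colsLexPos_iff_factorization_general [Finite ι] (A : Matrix m ι K) :
    (∀ j, 0 < toLex (A.col j)) ↔ ∃ (L : Matrix m m K) (P : Matrix m ι K),
      IsUnitLowerTriangular L ∧ (∀ j, 0 < P.col j) ∧ A = L * P := by
  refine ⟨exists_isUnitLowerTriangular_mul_of_toLex_col_pos, ?_⟩
  rintro ⟨L, P, hL, hP, rfl⟩ j
  exact hL.toLex_mulVec_pos (Pi.toLex_strictMono (hP j))

end Factorization

theorem col_pos_iff {m ι R : Type*} [Zero R] [PartialOrder R] {P : Matrix m ι R} {j : ι} :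
    0 < P.col j ↔ (∀ i, 0 ≤ P i j) ∧ (fun i ↦ P i j) ≠ 0 :=
  lt_iff_le_and_ne.trans (and_congr_right' ne_comm)

theorem colsLexPos_iff_toLex_col_pos {n : ℕ} (A : Matrix (Fin n) (Fin n) ℝ) :
    ColsLexPos A ↔ ∀ j, 0 < toLex (A.col j) :=
  Iff.rfl

/-- A matrix has all columns lexicographically positive iff it factors as `L * P` with `L`
unitary lower-triangular and every column of `P` nonnegative and nonzero. -/
theorem colsLexPos_iff_factorization {n : ℕ} (A : Matrix (Fin n) (Fin n) ℝ) :
    ColsLexPos A ↔ ∃ L P : Matrix (Fin n) (Fin n) ℝ,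
      (∀ i j : Fin n, i < j → L i j = 0) ∧ (∀ i : Fin n, L i i = 1) ∧
      (∀ j : Fin n, (∀ i, 0 ≤ P i j) ∧ (fun i => P i j) ≠ 0) ∧
      A = L * P := by
  simp only [colsLexPos_iff_toLex_col_pos, colsLexPos_iff_factorization_general,
    isUnitLowerTriangular_iff, col_pos_iff, and_assoc]
end

section
/- Every coherent set of desirable gambles K ⊆ ℝ^n equals the intersection of all maximal coherent sets of desirable gambles that contain it: K = ⋂{K' : K' is a maximal coherent set of desirable gambles and K ⊆ K'}. -/
open Matrix BigOperators

/-!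
The coherent sets containing a given coherent `K` are exactly the blunt convex cones containing
`K`, since A3 passes to supersets. A nonzero `x` outside a blunt cone `C` can be excluded from a
maximal blunt cone above `C`: adjoining the ray through `-x` keeps `C` blunt, because a relation
`c + r • -x = 0` with `c ∈ C` and `0 < r` would put `x` in `C`; then Zorn's lemma applies, and a
blunt cone containing `-x` does not contain `x`.
-/

open ConvexCone

section ConvexConeLattice

variable {R M : Type*} [Semiring R] [PartialOrder R] [AddCommMonoid M]

theorem mem_convexCone_sup [Module R M] {C D : ConvexCone R M} {x : M} :
    x ∈ C ⊔ D ↔ x ∈ C ∨ x ∈ D ∨ x ∈ C + D := by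
  constructor
  · let U : Set M := {y | y ∈ C ∨ y ∈ D ∨ y ∈ C + D}
    have add_mem_left : ∀ c ∈ C, ∀ y ∈ U, c + y ∈ U := by
      rintro c hc y (hy | hy | ⟨c', hc', d, hd, rfl⟩)
      · exact .inl (add_mem hc hy)
      · exact .inr (.inr ⟨c, hc, y, hy, rfl⟩)
      · exact .inr (.inr ⟨c + c', add_mem hc hc', d, hd, add_assoc ..⟩)
    have add_mem_right : ∀ d ∈ D, ∀ y ∈ U, d + y ∈ U := by
      rintro d hd y (hy | hy | ⟨c, hc, d', hd', rfl⟩)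
      · exact .inr (.inr ⟨y, hy, d, hd, add_comm ..⟩)
      · exact .inr (.inl (add_mem hd hy))
      · exact .inr (.inr ⟨c, hc, d + d', add_mem hd hd', add_left_comm ..⟩)
    let E : ConvexCone R M :=
      { carrier := U
        smul_mem' := fun _ hr _ ↦
          Or.imp (C.smul_mem hr) (Or.imp (D.smul_mem hr) ((C + D).smul_mem hr))
        add_mem' := by
          rintro x (hx | hx | ⟨c, hc, d, hd, rfl⟩) y hy
          · exact add_mem_left x hx y hy
          · exact add_mem_right x hx y hy
          · rw [add_assoc]
            exact add_mem_left c hc _ (add_mem_right d hd y hy) }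
    have sup_le_E : C ⊔ D ≤ E := sup_le (fun _ ↦ .inl) (fun _ ↦ .inr ∘ .inl)
    exact fun hx ↦ sup_le_E hx
  · rintro (hx | hx | ⟨c, hc, d, hd, rfl⟩)
    · exact le_sup_left (a := C) hx
    · exact le_sup_right (b := D) hx
    · exact add_mem (le_sup_left (a := C) hc) (le_sup_right (b := D) hd)

theorem mem_convexCone_sSup_of_directedOn [SMul R M] {S : Set (ConvexCone R M)}
    (hS : DirectedOn (· ≤ ·) S) {x : M} : x ∈ sSup S ↔ ∃ C ∈ S, x ∈ C := by
  constructor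
  · let U : ConvexCone R M :=
      { carrier := {y | ∃ C ∈ S, y ∈ C}
        smul_mem' := fun _ hr _ ⟨C, hC, hy⟩ ↦ ⟨C, hC, C.smul_mem hr hy⟩
        add_mem' := by
          rintro y ⟨C, hC, hy⟩ z ⟨D, hD, hz⟩
          obtain ⟨E, hE, hCE, hDE⟩ := hS C hC D hD
          exact ⟨E, hE, add_mem (hCE hy) (hDE hz)⟩ }
    have sSup_le_U : sSup S ≤ U := sSup_le fun C hC _ hy ↦ ⟨C, hC, hy⟩
    exact fun hx ↦ sSup_le_U hx
  · rintro ⟨C, hC, hx⟩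
    exact le_sSup hC hx

theorem exists_le_maximal_blunt [SMul R M] {C : ConvexCone R M} (hC : C.Blunt) :
    ∃ D, C ≤ D ∧ Maximal Blunt D := by
  refine zorn_le_nonempty₀ {D : ConvexCone R M | D.Blunt} (fun S hS chain _ _ ↦ ?_) C hC
  refine ⟨sSup S, fun zero_mem ↦ ?_, fun _ ↦ le_sSup⟩
  obtain ⟨D, hD, zero_mem_D⟩ := (mem_convexCone_sSup_of_directedOn chain.directedOn).1 zero_mem
  exact hS hD zero_mem_D

end ConvexConeLattice

theorem blunt_sup_iff {R E : Type*} [Semiring R] [PartialOrder R] [AddCommGroup E] [Module R E]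
    {C D : ConvexCone R E} :
    (C ⊔ D).Blunt ↔ C.Blunt ∧ D.Blunt ∧ ∀ x ∈ C, -x ∉ D := by
  simp only [Blunt, mem_convexCone_sup, mem_add, add_eq_zero_iff_neg_eq, exists_eq_right', not_or,
    not_exists, not_and]

section MaximalBlunt

variable {𝕜 E : Type*} [Field 𝕜] [LinearOrder 𝕜] [IsStrictOrderedRing 𝕜] [AddCommGroup E]
  [Module 𝕜 E] {C : ConvexCone 𝕜 E} {x : E}

theorem mem_convexCone_hull_singleton {y : E} :
    y ∈ hull 𝕜 {x} ↔ ∃ r : 𝕜, 0 < r ∧ y = r • x := by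
  simp only [mem_hull_of_convex (convex_singleton x), Set.smul_set_singleton,
    Set.mem_singleton_iff]

theorem blunt_hull_singleton (hx : x ≠ 0) : (hull 𝕜 {x}).Blunt := by
  intro zero_mem
  obtain ⟨r, hr, zero_eq⟩ := mem_convexCone_hull_singleton.1 zero_mem
  exact smul_ne_zero hr.ne' hx zero_eq.symm

theorem blunt_sup_hull_neg (hC : C.Blunt) (hx : x ≠ 0) (hxC : x ∉ C) :
    (C ⊔ hull 𝕜 {-x}).Blunt := by
  refine blunt_sup_iff.2 ⟨hC, blunt_hull_singleton (neg_ne_zero.2 hx), fun c hc neg_mem ↦ hxC ?_⟩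
  obtain ⟨r, hr, neg_eq⟩ := mem_convexCone_hull_singleton.1 neg_mem
  rw [smul_neg, neg_inj] at neg_eq
  exact (C.smul_mem_iff hr).1 (neg_eq ▸ hc)

theorem exists_le_maximal_blunt_notMem (hC : C.Blunt) (hxC : x ∉ C) :
    ∃ D, C ≤ D ∧ Maximal Blunt D ∧ x ∉ D := by
  rcases eq_or_ne x 0 with rfl | hx
  · obtain ⟨D, hCD, hD⟩ := exists_le_maximal_blunt hC
    exact ⟨D, hCD, hD, hD.prop⟩
  · obtain ⟨D, hle, hD⟩ := exists_le_maximal_blunt (blunt_sup_hull_neg hC hx hxC)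
    have neg_mem : -x ∈ D := hle (le_sup_right (a := C) (subset_hull rfl))
    exact ⟨D, le_sup_left.trans hle, hD, fun hxD ↦ hD.prop.salient x hxD hx neg_mem⟩

theorem desirable_eq_iInter_maximal_general (hC : C.Blunt) :
    C = sInf {D : ConvexCone 𝕜 E | Maximal Blunt D ∧ C ≤ D} := by
  refine le_antisymm (le_sInf fun D hD ↦ hD.2) fun x hx ↦ ?_
  by_contra hxC
  obtain ⟨D, hCD, hD, hxD⟩ := exists_le_maximal_blunt_notMem hC hxC
  exact hxD (mem_sInf.1 hx D ⟨hD, hCD⟩)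

end MaximalBlunt

section Desirable

variable {n : ℕ}

theorem CohDesirable.exists_convexCone {K : Set (Fin n → ℝ)} (hK : CohDesirable K) :
    ∃ C : ConvexCone ℝ (Fin n → ℝ), C = K :=
  ⟨⟨K, fun r hr g hg ↦ hK.2.1 g hg r hr, fun g hg f hf ↦ hK.1 g hg f hf⟩, rfl⟩

theorem cohDesirable_coe_iff {C : ConvexCone ℝ (Fin n → ℝ)} :
    CohDesirable (C : Set (Fin n → ℝ)) ↔ C.Blunt ∧ strictlyPositive ℝ (Fin n → ℝ) ≤ C where
  mp := fun ⟨_, _, pos_mem, blunt⟩ ↦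
    ⟨blunt, fun g (hg : 0 < g) ↦ pos_mem g (Pi.le_def.1 hg.le) hg.ne'⟩
  mpr := fun ⟨blunt, pos_le⟩ ↦
    ⟨fun _ hg _ hf ↦ add_mem hg hf, fun _ hg _ hr ↦ C.smul_mem hr hg,
      fun _ hg hg0 ↦ pos_le (lt_of_le_of_ne' hg hg0), blunt⟩

theorem maximal_cohDesirable_coe_iff {C : ConvexCone ℝ (Fin n → ℝ)}
    (pos_le : strictlyPositive ℝ (Fin n → ℝ) ≤ C) :
    Maximal CohDesirable (C : Set (Fin n → ℝ)) ↔ Maximal Blunt C where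
  mp hC := ⟨(cohDesirable_coe_iff.1 hC.prop).1, fun _ hD hCD ↦
    hC.le_of_ge (cohDesirable_coe_iff.2 ⟨hD, pos_le.trans hCD⟩) hCD⟩
  mpr hC := by
    refine ⟨cohDesirable_coe_iff.2 ⟨hC.prop, pos_le⟩, fun K hK hCK ↦ ?_⟩
    obtain ⟨D, rfl⟩ := hK.exists_convexCone
    exact hC.le_of_ge (cohDesirable_coe_iff.1 hK).1 hCK

theorem setOf_maximal_cohDesirable_eq_image {C : ConvexCone ℝ (Fin n → ℝ)}
    (pos_le : strictlyPositive ℝ (Fin n → ℝ) ≤ C) :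
    {K : Set (Fin n → ℝ) | Maximal CohDesirable K ∧ ↑C ⊆ K} =
      (↑) '' {D : ConvexCone ℝ (Fin n → ℝ) | Maximal Blunt D ∧ C ≤ D} := by
  ext K
  constructor
  · rintro ⟨hK, hCK⟩
    obtain ⟨D, rfl⟩ := hK.prop.exists_convexCone
    exact ⟨D, ⟨(maximal_cohDesirable_coe_iff (pos_le.trans hCK)).1 hK, hCK⟩, rfl⟩
  · rintro ⟨D, ⟨hD, hCD⟩, rfl⟩
    exact ⟨(maximal_cohDesirable_coe_iff (pos_le.trans hCD)).2 hD, hCD⟩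

theorem maximal_cohDesirable_iff {K : Set (Fin n → ℝ)} :
    Maximal CohDesirable K ↔ CohDesirable K ∧ ∀ K', CohDesirable K' → ¬ K ⊂ K' := by
  simp only [maximal_iff_forall_gt, imp_not_comm]

end Desirable

/-- Every coherent set of desirable gambles is the intersection of the maximal coherent
sets of desirable gambles containing it. -/
theorem desirable_eq_iInter_maximal {n : ℕ} (K : Set (Fin n → ℝ)) (hK : CohDesirable K) :
    K = ⋂₀ {K' : Set (Fin n → ℝ) |
      (CohDesirable K' ∧ ∀ K'' : Set (Fin n → ℝ), CohDesirable K'' → ¬ K' ⊂ K'') ∧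
      K ⊆ K'} := by
  obtain ⟨C, rfl⟩ := hK.exists_convexCone
  obtain ⟨blunt, pos_le⟩ := cohDesirable_coe_iff.1 hK
  simp only [← maximal_cohDesirable_iff]
  rw [setOf_maximal_cohDesirable_eq_image pos_le, Set.sInter_image, ← coe_sInf,
    ← desirable_eq_iInter_maximal_general blunt]
end

section
/- Let A ∈ ℝ^{n×n} have orthonormal rows (A Aᵀ = I) and all columns lexicographically positive (A >_L 0_n). Then there exists a full-rank row-stochastic matrix P ∈ ℝ^{n×n} (each row of P is a probability mass function and P is invertible) such that P^◊ = A^◊, where M^◊ := {g ∈ ℝ^n : Mg >_L 0_n} for a matrix M. -/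
open Matrix BigOperators

/-- `M^◊` for a single matrix: the gambles mapped to a lexicographically positive
vector. -/
def matDiamond {n : ℕ} (M : Matrix (Fin n) (Fin n) ℝ) : Set (Fin n → ℝ) :=
  {g | LexLt 0 (M.mulVec g)}

/-- A row-stochastic matrix: every row is a probability mass function. -/
def RowStochastic {n : ℕ} (P : Matrix (Fin n) (Fin n) ℝ) : Prop :=
  (∀ i j : Fin n, 0 ≤ P i j) ∧ ∀ i : Fin n, ∑ j, P i j = 1

/-!
Multiplying on the left by a lower triangular matrix with positive diagonal changes neither the
position nor the sign of the first nonzero entry of a vector, so it preserves `matDiamond`.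
For small `ε > 0` the rows `∑ k ≤ i, ε ^ k • A k` are nonnegative: in each column the first nonzero
entry is positive and dominates the later ones. These rows arise from such a
multiplication, and so does their rescaling to row sums one.
-/

open Filter Topology

section LowerTriangular

variable {m R : Type*} [Fintype m] [LinearOrder m]

theorem mulVec_apply_of_isLowerTriangular [NonUnitalNonAssocSemiring R] {L : Matrix m m R}
    (hL : L.IsLowerTriangular) {v : m → R} {i : m} (hv : ∀ j < i, v j = 0) :
    (L *ᵥ v) i = L i i * v i := by
  rw [mulVec, dotProduct]
  refine Finset.sum_eq_single_of_mem i (Finset.mem_univ i) fun j _ hji => ?_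
  rcases hji.lt_or_gt with hlt | hgt
  · rw [hv j hlt, mul_zero]
  · rw [hL hgt, zero_mul]

theorem forall_lt_mulVec_eq_zero_iff [NonUnitalNonAssocSemiring R] [NoZeroDivisors R]
    {L : Matrix m m R} (hL : L.IsLowerTriangular) (hdiag : ∀ i, L i i ≠ 0) {v : m → R} {k : m} :
    (∀ i < k, (L *ᵥ v) i = 0) ↔ ∀ i < k, v i = 0 := by
  refine ⟨fun hLv i => ?_, fun hv i hik => ?_⟩
  · induction i using WellFoundedLT.induction with
    | ind i ih =>
      intro hik
      have hentry : L i i * v i = 0 := by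
        rw [← mulVec_apply_of_isLowerTriangular hL fun j hji => ih j hji (hji.trans hik)]
        exact hLv i hik
      exact (mul_eq_zero.mp hentry).resolve_left (hdiag i)
  · rw [mulVec_apply_of_isLowerTriangular hL fun j hji => hv j (hji.trans hik), hv i hik, mul_zero]

end LowerTriangular

/-- Lower triangular matrices with positive diagonal: the row operations that preserve
lexicographic positivity. -/
structure IsPosLowerTriangular {m R : Type*} [LT m] [Zero R] [LT R] (L : Matrix m m R) : Prop where
  isLowerTriangular : L.IsLowerTriangular
  diag_pos : ∀ i, 0 < L i i

theorem isPosLowerTriangular_diagonal {m R : Type*} [Preorder m] [DecidableEq m] [Zero R] [LT R]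
    {d : m → R} (hd : ∀ i, 0 < d i) : IsPosLowerTriangular (diagonal d) where
  isLowerTriangular := blockTriangular_diagonal d
  diag_pos i := by simpa only [diagonal_apply_eq] using hd i

namespace IsPosLowerTriangular

theorem isUnit_det {m R : Type*} [Fintype m] [LinearOrder m] [Field R] [LinearOrder R]
    [IsStrictOrderedRing R] {L : Matrix m m R} (hL : IsPosLowerTriangular L) : IsUnit L.det := by
  rw [det_of_isLowerTriangular L hL.isLowerTriangular]
  exact (Finset.prod_pos fun i _ => hL.diag_pos i).ne'.isUnit

variable {n : ℕ} {L : Matrix (Fin n) (Fin n) ℝ}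

theorem lexLt_zero_mulVec_iff (hL : IsPosLowerTriangular L) {v : Fin n → ℝ} :
    LexLt 0 (L *ᵥ v) ↔ LexLt 0 v := by
  have hdiag : ∀ i, L i i ≠ 0 := fun i => (hL.diag_pos i).ne'
  simp only [LexLt, Pi.zero_apply, eq_comm (a := (0 : ℝ)),
    forall_lt_mulVec_eq_zero_iff hL.isLowerTriangular hdiag]
  refine exists_congr fun k => and_congr_right fun hv => ?_
  rw [mulVec_apply_of_isLowerTriangular hL.isLowerTriangular hv]
  exact mul_pos_iff_of_pos_left (hL.diag_pos k)

theorem matDiamond_mul (hL : IsPosLowerTriangular L) (A : Matrix (Fin n) (Fin n) ℝ) :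
    matDiamond (L * A) = matDiamond A := by
  ext g
  simp only [matDiamond, Set.mem_ofPred_eq, ← mulVec_mulVec, hL.lexLt_zero_mulVec_iff]

end IsPosLowerTriangular

section SmallPowers

variable {ι R : Type*} [LinearOrder ι] [Field R] [LinearOrder R] [IsStrictOrderedRing R]
  [TopologicalSpace R] [OrderTopology R]

theorem eventually_sum_pow_mul_pos {d : ι → ℕ} (hd : StrictMono d) {a : ι → R} {s : Finset ι}
    {k : ι} (hks : k ∈ s) (hzero : ∀ j ∈ s, j < k → a j = 0) (hk : 0 < a k) :
    ∀ᶠ ε in 𝓝[>] (0 : R), 0 < ∑ j ∈ s, ε ^ d j * a j := by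
  let quotient : R → R := fun ε => ∑ j ∈ s, ε ^ (d j - d k) * a j
  have hfactor (ε : R) : ∑ j ∈ s, ε ^ d j * a j = ε ^ d k * quotient ε := by
    rw [Finset.mul_sum]
    refine Finset.sum_congr rfl fun j hj => ?_
    rcases lt_or_ge j k with hjk | hkj
    · simp only [hzero j hj hjk, mul_zero]
    · rw [← mul_assoc, pow_mul_pow_sub ε (hd.monotone hkj)]
  have hquotient_zero : quotient 0 = a k := by
    refine (Finset.sum_eq_single_of_mem k hks fun j hj hjk => ?_).trans (by simp)
    rcases hjk.lt_or_gt with hlt | hgt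
    · rw [hzero j hj hlt, mul_zero]
    · rw [zero_pow (Nat.sub_ne_zero_of_lt (hd hgt)), zero_mul]
  have hquotient_pos : ∀ᶠ ε in 𝓝 (0 : R), 0 < quotient ε := by
    have hcont : Continuous quotient := by fun_prop
    exact hcont.continuousAt.eventually_const_lt (hquotient_zero ▸ hk)
  filter_upwards [nhdsWithin_le_nhds hquotient_pos, self_mem_nhdsWithin] with ε hε hε_pos
  rw [hfactor]
  exact mul_pos (pow_pos hε_pos _) hε

end SmallPowers

theorem LexLt.eventually_sum_Iic_nonneg {n : ℕ} {a : Fin n → ℝ} (ha : LexLt 0 a) (i : Fin n) :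
    ∀ᶠ ε in 𝓝[>] (0 : ℝ), 0 ≤ ∑ k ∈ Finset.Iic i, ε ^ (k : ℕ) * a k := by
  obtain ⟨k, hzero, hk⟩ := ha
  rcases lt_or_ge i k with hik | hki
  · refine Eventually.of_forall fun ε => (Finset.sum_eq_zero fun j hj => ?_).ge
    rw [← hzero j ((Finset.mem_Iic.mp hj).trans_lt hik), Pi.zero_apply, mul_zero]
  · have hpos := eventually_sum_pow_mul_pos Fin.val_strictMono (Finset.mem_Iic.mpr hki)
      (fun j _ hjk => (hzero j hjk).symm) hk
    exact hpos.mono fun ε hε => hε.le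

/-- The lower triangular matrix whose `i`-th row is `(1, ε, …, ε ^ i, 0, …, 0)`; rows are indexed
from `0`. Left multiplication by it replaces the rows of a matrix by `ε`-weighted partial sums. -/
def powerLowerTriangular {R : Type*} [MonoidWithZero R] (n : ℕ) (ε : R) :
    Matrix (Fin n) (Fin n) R :=
  of fun i k => if k ≤ i then ε ^ (k : ℕ) else 0

theorem isPosLowerTriangular_powerLowerTriangular {R : Type*} [Semiring R] [PartialOrder R]
    [IsStrictOrderedRing R] (n : ℕ) {ε : R} (hε : 0 < ε) :
    IsPosLowerTriangular (powerLowerTriangular n ε) where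
  isLowerTriangular _ _ hij := if_neg (not_le_of_gt hij)
  diag_pos i := by simpa [powerLowerTriangular] using pow_pos hε i

theorem powerLowerTriangular_mul_apply {R m : Type*} [Semiring R] {n : ℕ} (ε : R)
    (A : Matrix (Fin n) m R) (i : Fin n) (j : m) :
    (powerLowerTriangular n ε * A) i j = ∑ k ∈ Finset.Iic i, ε ^ (k : ℕ) * A k j := by
  simp [powerLowerTriangular, mul_apply, ite_mul, ← Finset.sum_filter, Finset.filter_ge_eq_Iic]

theorem ColsLexPos.exists_powerLowerTriangular_mul_nonneg {n : ℕ} {A : Matrix (Fin n) (Fin n) ℝ}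
    (hpos : ColsLexPos A) : ∃ ε > (0 : ℝ), ∀ i j, 0 ≤ (powerLowerTriangular n ε * A) i j := by
  have hnonneg : ∀ᶠ ε in 𝓝[>] (0 : ℝ), ∀ i j, 0 ≤ (powerLowerTriangular n ε * A) i j := by
    simp only [powerLowerTriangular_mul_apply, eventually_all]
    exact fun i j => (hpos j).eventually_sum_Iic_nonneg i
  obtain ⟨ε, hε, hε_pos⟩ := (hnonneg.and self_mem_nhdsWithin).exists
  exact ⟨ε, hε_pos, hε⟩

theorem sum_row_pos_of_nonneg_of_det_ne_zero {m R : Type*} [Fintype m] [DecidableEq m] [CommRing R]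
    [PartialOrder R] [IsOrderedAddMonoid R] {Q : Matrix m m R} (hQ : ∀ i j, 0 ≤ Q i j)
    (hdet : Q.det ≠ 0) (i : m) : 0 < ∑ j, Q i j := by
  refine (Finset.sum_nonneg fun j _ => hQ i j).lt_of_ne' fun hsum => hdet ?_
  have hrow := (Finset.sum_eq_zero_iff_of_nonneg fun j _ => hQ i j).mp hsum
  exact det_eq_zero_of_row_eq_zero i fun j => hrow j (Finset.mem_univ j)

theorem rowStochastic_diagonal_inv_sum_mul {n : ℕ} {Q : Matrix (Fin n) (Fin n) ℝ}
    (hQ : ∀ i j, 0 ≤ Q i j) (hsum : ∀ i, ∑ j, Q i j ≠ 0) :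
    RowStochastic (diagonal (fun i => (∑ j, Q i j)⁻¹) * Q) := by
  refine ⟨fun i j => ?_, fun i => ?_⟩
  · rw [diagonal_mul]
    exact mul_nonneg (inv_nonneg.mpr (Finset.sum_nonneg fun j _ => hQ i j)) (hQ i j)
  · simp only [diagonal_mul, ← Finset.mul_sum, inv_mul_cancel₀ (hsum i)]

theorem exists_stochastic_same_polar_general {n : ℕ} (A : Matrix (Fin n) (Fin n) ℝ)
    (hA : IsUnit A.det) (hpos : ColsLexPos A) :
    ∃ P : Matrix (Fin n) (Fin n) ℝ, RowStochastic P ∧ IsUnit P.det ∧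
      matDiamond P = matDiamond A := by
  obtain ⟨ε, hε, hQ⟩ := hpos.exists_powerLowerTriangular_mul_nonneg
  have hL := isPosLowerTriangular_powerLowerTriangular n hε
  set Q := powerLowerTriangular n ε * A with hQ_def
  have hQ_det : IsUnit Q.det := by
    rw [hQ_def, det_mul]
    exact hL.isUnit_det.mul hA
  have hsum : ∀ i, 0 < ∑ j, Q i j := sum_row_pos_of_nonneg_of_det_ne_zero hQ hQ_det.ne_zero
  have hD : IsPosLowerTriangular (diagonal fun i => (∑ j, Q i j)⁻¹) :=
    isPosLowerTriangular_diagonal fun i => inv_pos.mpr (hsum i)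
  refine ⟨_, rowStochastic_diagonal_inv_sum_mul hQ fun i => (hsum i).ne', ?_, ?_⟩
  · rw [det_mul]
    exact hD.isUnit_det.mul hQ_det
  · exact (hD.matDiamond_mul Q).trans (hL.matDiamond_mul A)

/-- Every orthonormal matrix with lexicographically positive columns determines the same
semispace as some full-rank row-stochastic matrix. -/
theorem exists_stochastic_same_polar {n : ℕ} (A : Matrix (Fin n) (Fin n) ℝ)
    (hA : A * Aᵀ = 1) (hpos : ColsLexPos A) :
    ∃ P : Matrix (Fin n) (Fin n) ℝ, RowStochastic P ∧ IsUnit P.det ∧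
      matDiamond P = matDiamond A :=
  exists_stochastic_same_polar_general A (isUnit_det_of_right_inverse hA) hpos
end
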